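/- arXiv:cs/0101019 — 2 statements merged into one kernel-verified Lean document; each statement's English description precedes it below -/
import Mathlib

section
/- Relative loss ratio bound: for every n ≥ 1 with L_{nΛμ} > 0, L_{nΛξ}/L_{nΛμ} ≤ 1 + 2√(H_n/L_{nΛμ}) + 2 H_n/L_{nΛμ}; in particular L_{nΛξ}/L_{nΛμ} → 1 whenever L_{nΛμ} → ∞ and H_n stays bounded. -/
open Finset Filter

/-- A probability distribution on finite binary strings:
nonnegative, `1` on the empty string, and additive under one-symbol extension. -/
def IsDistr (ρ : List Bool → ℝ) : Prop :=
  (∀ x, 0 ≤ ρ x) ∧ ρ [] = 1 ∧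
    ∀ x, ρ x = ρ (x ++ [false]) + ρ (x ++ [true])

/-- Conditional probability `ρ(b | x) = ρ(xb)/ρ(x)` (junk `0` when `ρ x = 0`). -/
noncomputable def condP (ρ : List Bool → ℝ) (x : List Bool) (b : Bool) : ℝ :=
  ρ (x ++ [b]) / ρ x

/-- Instantaneous relative entropy
`h_t(x) = ∑_b μ(b|x) ln (μ(b|x)/ξ(b|x))` (conventions `0·ln 0 = 0` are automatic
since `Real.log 0 = 0` and `r/0 = 0`). -/
noncomputable def instEnt (μ ξ : List Bool → ℝ) (x : List Bool) : ℝ :=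
  ∑ b : Bool, condP μ x b * Real.log (condP μ x b / condP ξ x b)

/-- Total relative entropy `H_n = ∑_{t=1}^n ∑_{x_{<t}} μ(x_{<t}) h_t(x_{<t})`
(histories of length `t-1`, i.e. length `t ∈ {0,…,n-1}`). -/
noncomputable def totalEnt (μ ξ : List Bool → ℝ) (n : ℕ) : ℝ :=
  ∑ t ∈ Finset.range n, ∑ x : Fin t → Bool,
    μ (List.ofFn x) * instEnt μ ξ (List.ofFn x)

/-- `ρ`-expected loss of predicting `y` after history `x`. -/
noncomputable def expLoss (ρ : List Bool → ℝ) (l : Bool → Bool → ℝ)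
    (x : List Bool) (y : Bool) : ℝ :=
  ∑ b : Bool, condP ρ x b * l b y

/-- `Y` is a fixed choice of minimizers for the scheme `Λ_ρ`. -/
def IsPredictor (ρ : List Bool → ℝ) (l : Bool → Bool → ℝ)
    (Y : List Bool → Bool) : Prop :=
  ∀ x y, expLoss ρ l x (Y x) ≤ expLoss ρ l x y

/-- Total `μ`-expected loss `L_{nΛ}` of the scheme with minimizers `Y`. -/
noncomputable def totalLoss (μ : List Bool → ℝ) (l : Bool → Bool → ℝ)
    (Y : List Bool → Bool) (n : ℕ) : ℝ :=
  ∑ t ∈ Finset.range n, ∑ x : Fin t → Bool,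
    μ (List.ofFn x) * expLoss μ l (List.ofFn x) (Y (List.ofFn x))


/-- Binary relative entropy. -/
noncomputable def klB (y z : ℝ) : ℝ :=
  y * Real.log (y / z) + (1 - y) * Real.log ((1 - y) / (1 - z))

lemma klB_eq {y z : ℝ} (hy : 0 < y) (hy1 : y < 1) (hz : 0 < z) (hz1 : z < 1) :
    klB y z = (-y * Real.log z - (1 - y) * Real.log (1 - z))
      - (-y * Real.log y - (1 - y) * Real.log (1 - y)) := by
  unfold klB
  rw [Real.log_div hy.ne' hz.ne', Real.log_div (by linarith) (by linarith)]
  ring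

lemma klB_swap (y z : ℝ) : klB (1 - y) (1 - z) = klB y z := by
  unfold klB
  rw [sub_sub_cancel, sub_sub_cancel]; ring

lemma hasDerivAt_base (y u : ℝ) (hu : 0 < u) (hu1 : u < 1) :
    HasDerivAt (fun u => -y * Real.log u - (1 - y) * Real.log (1 - u))
      (-(y - u) / (u * (1 - u))) u := by
  have h1 := (Real.hasDerivAt_log hu.ne').const_mul (-y)
  have h2 := (((hasDerivAt_id u).const_sub 1).log (by simp; linarith)).const_mul (1 - y)
  have h3 := h1.sub h2
  have h1u : (1 - u) ≠ 0 := by linarith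
  refine h3.congr_deriv ?_
  simp only [id]
  field_simp
  ring

lemma antitone_of_D (y a b : ℝ) (ha : 0 < a) (hb : b < 1) (hby : b ≤ y)
    (D D' : ℝ → ℝ) (hD : ∀ u ∈ Set.Icc a b, HasDerivAt D (D' u) u)
    (hpos : ∀ u ∈ Set.Icc a b, 0 < D u)
    (hin : ∀ u ∈ Set.Icc a b,
      u * (1 - u) * (2 * D u + (y - u) * D' u) ≤ D u ^ 2) (hab : a ≤ b) :
    (-y * Real.log b - (1 - y) * Real.log (1 - b)) - (y - b) ^ 2 / D b ≤
    (-y * Real.log a - (1 - y) * Real.log (1 - a)) - (y - a) ^ 2 / D a := by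
  have hder : ∀ u ∈ Set.Icc a b, HasDerivAt
      (fun u => (-y * Real.log u - (1 - y) * Real.log (1 - u)) - (y - u) ^ 2 / D u)
      (-(y - u) / (u * (1 - u)) + (y - u) * (2 * D u + (y - u) * D' u) / D u ^ 2) u := by
    intro u hu
    have h1 := hasDerivAt_base y u (by linarith [hu.1]) (by linarith [hu.2])
    have h2 := (((hasDerivAt_id u).const_sub y).pow 2).div (hD u hu) (hpos u hu).ne'
    refine (h1.sub h2).congr_deriv ?_
    simp only [id]
    simp
    ring
  have := antitoneOn_of_hasDerivWithinAt_nonpos (convex_Icc a b)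
    (fun u hu => (hder u hu).continuousAt.continuousWithinAt)
    (fun u hu => (hder u (interior_subset hu)).hasDerivWithinAt) (by
      intro u hu
      have hu := interior_subset hu
      have h0 : 0 < u := by linarith [hu.1]
      have h1 : 0 < 1 - u := by linarith [hu.2]
      have hyu : 0 ≤ y - u := by linarith [hu.2]
      have hp := hpos u hu
      have : (2 * D u + (y - u) * D' u) / D u ^ 2 ≤ 1 / (u * (1 - u)) := by
        rw [div_le_div_iff₀ (by positivity) (by positivity)]
        linarith [hin u hu]
      have h5 := mul_le_mul_of_nonneg_left this hyu
      have e1 : -(y - u) / (u * (1 - u)) = - ((y - u) * (1 / (u * (1 - u)))) := by ring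
      rw [e1, mul_div_assoc]
      linarith)
  exact this (Set.left_mem_Icc.2 hab) (Set.right_mem_Icc.2 hab) hab

/-- Upper half. -/
lemma klB_ge_upper {y z : ℝ} (hz : 1 / 2 ≤ z) (hzy : z ≤ y) (hy : y < 1) :
    (y - z) ^ 2 / (2 * (z * (1 - z))) ≤ klB y z := by
  rw [klB_eq (by linarith) hy (by linarith) (by linarith)]
  have := antitone_of_D y z y (by linarith) hy le_rfl (fun u => 2 * (u * (1 - u)))
    (fun u => 2 * (1 - 2 * u)) (fun u _ => by
      have := (((hasDerivAt_id u).mul ((hasDerivAt_id u).const_sub 1))).const_mul 2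
      refine this.congr_deriv ?_
      simp only [id]; ring) (fun u hu => by
      have h0 : 0 < u := by linarith [hu.1]
      have h1 : 0 < 1 - u := by linarith [hu.2]
      positivity) (fun u hu => by
      have h0 : 0 < u := by linarith [hu.1]
      have h1 : 0 < 1 - u := by linarith [hu.2]
      have h2 : 0 ≤ (u * (1 - u)) * ((y - u) * (2 * u - 1)) :=
        mul_nonneg (by positivity) (mul_nonneg (by linarith [hu.2]) (by linarith [hu.1]))
      nlinarith) hzy
  simp only [sub_self] at this
  norm_num at this
  norm_num
  linarith

lemma klB_lower_mono {y z b : ℝ} (hz : 0 < z) (hzb : z ≤ b) (hb : b ≤ 1 / 2) (hby : b ≤ y)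
    (hy : y < 1) :
    (-y * Real.log b - (1 - y) * Real.log (1 - b))
        - (y - b) ^ 2 / (2 * ((1 - b) * (y + b - 2 * y * b))) ≤
    (-y * Real.log z - (1 - y) * Real.log (1 - z))
        - (y - z) ^ 2 / (2 * ((1 - z) * (y + z - 2 * y * z))) := by
  have q : ∀ u ∈ Set.Icc z b, u ≤ y + u - 2 * y * u := fun u hu => by
    have : 0 ≤ y * (1 - 2 * u) := mul_nonneg (by linarith) (by linarith [hu.2])
    linarith
  refine antitone_of_D y z b hz (by linarith) hby
    (fun u => 2 * ((1 - u) * (y + u - 2 * y * u)))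
    (fun u => 2 * (1 - 2 * u - 3 * y + 4 * y * u)) (fun u _ => ?_) (fun u hu => ?_)
    (fun u hu => ?_) hzb
  · have := (((hasDerivAt_id u).const_sub 1).mul
      (((hasDerivAt_id u).const_add y).sub ((hasDerivAt_id u).const_mul (2 * y)))).const_mul 2
    refine this.congr_deriv ?_
    simp only [id, Pi.sub_apply]; ring
  · have h0 : 0 < u := by linarith [hu.1]
    have h1 : 0 < 1 - u := by linarith [hu.2]
    have := q u hu
    have : 0 < y + u - 2 * y * u := by linarith
    positivity
  · have h0 : 0 < u := by linarith [hu.1]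
    have h1 : 0 < 1 - u := by linarith [hu.2]
    have hq := q u hu
    have hyu : 0 ≤ y - u := by linarith [hu.2]
    have h12 : 0 ≤ 1 - 2 * u := by linarith [hu.2]
    have hy0 : 0 < y := by linarith
    -- reduced inequality
    have key : u * ((1 - u) * (y + u - 2 * y * u) + (y - u) / 2 * (1 - 2 * u - 3 * y + 4 * y * u))
        ≤ (1 - u) * (y + u - 2 * y * u) ^ 2 := by
      have a1 : (y - u) / 2 * (1 - 2 * u - 3 * y + 4 * y * u) ≤ (y - u) / 2 * (1 - 2 * u) := by
        apply mul_le_mul_of_nonneg_left _ (by linarith)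
        nlinarith
      have a2 : (y - u) / 2 * (1 - 2 * u) ≤ (1 - u) * y * (1 - 2 * u) := by
        apply mul_le_mul_of_nonneg_right _ h12
        nlinarith [hu.2]
      have a3 : u * ((1 - u) * y * (1 - 2 * u))
          ≤ (y + u - 2 * y * u) * ((1 - u) * y * (1 - 2 * u)) :=
        mul_le_mul_of_nonneg_right hq (by positivity)
      have a4 := mul_le_mul_of_nonneg_left (a1.trans a2) h0.le
      nlinarith
    have := mul_le_mul_of_nonneg_left key (show 0 ≤ 4 * (1 - u) by linarith)
    nlinarith

lemma klB_ge_lower {y z : ℝ} (hz : 0 < z) (hz2 : z ≤ 1 / 2) (hzy : z ≤ y) (hy : y < 1) :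
    (y - z) ^ 2 / (2 * ((1 - z) * (y + z - 2 * y * z))) ≤ klB y z := by
  rcases le_total y (1 / 2) with h | h
  · have := klB_lower_mono hz hzy h le_rfl hy
    rw [klB_eq (by linarith) hy (by linarith) (by linarith)]
    rw [sub_self y] at this
    norm_num at this
    norm_num
    linarith
  · have h1 := klB_lower_mono hz hz2 le_rfl h hy
    have h2 := klB_ge_upper le_rfl h hy
    rw [klB_eq (by linarith) hy (by linarith) (by linarith)] at h2 ⊢
    have e : 2 * ((1 - 1 / 2) * (y + 1 / 2 - 2 * y * (1 / 2))) = 2 * (1 / 2 * (1 - 1 / 2 : ℝ)) := by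
      ring
    rw [e] at h1
    linarith

lemma klB_core {y z : ℝ} (hz : 0 < z) (hz1 : z < 1) (hzy : z ≤ y) (hy : y ≤ 1) :
    (y - z) ^ 2 ≤ 2 * ((y - z) + 2 * ((1 - y) * z)) * (max z (1 - z) * klB y z) := by
  have hM1 : z ≤ max z (1 - z) := le_max_left _ _
  have hM2 : 1 - z ≤ max z (1 - z) := le_max_right _ _
  rcases hy.eq_or_lt with rfl | hy
  · have : klB 1 z = - Real.log z := by simp [klB]
    rw [this]
    have hl := Real.log_le_sub_one_of_pos hz
    have : 1 / 2 * (1 - z) ≤ max z (1 - z) * (- Real.log z) :=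
      mul_le_mul (by linarith) (by linarith) (by linarith) (by linarith)
    nlinarith
  · have hq : 0 < y + z - 2 * y * z := by nlinarith [mul_pos hz (sub_pos.2 hy)]
    have eq : (y - z) + 2 * ((1 - y) * z) = y + z - 2 * y * z := by ring
    rw [eq]
    rcases le_total z (1 / 2) with h | h
    · have := klB_ge_lower hz h hzy hy
      rw [div_le_iff₀ (by have : 0 < 1 - z := by linarith
                          positivity)] at this
      rw [max_eq_right (by linarith)]
      linarith
    · have := klB_ge_upper h hzy hy
      rw [div_le_iff₀ (by have : 0 < 1 - z := by linarith
                          positivity)] at this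
      rw [max_eq_left (by linarith)]
      have hk : 0 ≤ klB y z := by
        by_contra hc
        have : 0 < 1 - z := by linarith
        have : klB y z * (2 * (z * (1 - z))) < 0 := mul_neg_of_neg_of_pos (by linarith) (by positivity)
        nlinarith [sq_nonneg (y - z)]
      have h3 : 1 - z ≤ y + z - 2 * y * z := by nlinarith
      have := mul_le_mul_of_nonneg_right h3 (show 0 ≤ 2 * (z * klB y z) by positivity)
      linarith

lemma klB_nonneg {y z : ℝ} (hz : 0 < z) (hz1 : z < 1) (hy0 : 0 ≤ y) (hy : y ≤ 1) :
    0 ≤ klB y z := by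
  wlog hzy : z ≤ y generalizing y z
  · rw [← klB_swap]
    exact this (by linarith) (by linarith) (by linarith) (by linarith) (by linarith)
  have := klB_core hz hz1 hzy hy
  rcases hzy.eq_or_lt with rfl | hlt
  · have h : 1 - z ≠ 0 := by linarith
    simp [klB, div_self hz.ne', div_self h]
  by_contra hc
  have hM : 0 < max z (1 - z) := lt_max_of_lt_left hz
  have h1 : max z (1 - z) * klB y z < 0 := mul_neg_of_pos_of_neg hM (by linarith)
  have h2 : 0 ≤ (1 - y) * z := mul_nonneg (by linarith) hz.le
  nlinarith [mul_neg_of_pos_of_neg (show 0 < 2 * ((y - z) + 2 * ((1 - y) * z)) by linarith) h1,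
    sq_nonneg (y - z)]

/-- The one-step loss bound, nondegenerate case. -/
lemma step_bound {y z A a0 a1 b0 b1 : ℝ} (hz : 0 < z) (hz1 : z < 1) (hy0 : 0 ≤ y) (hy : y ≤ 1)
    (hA : 0 < A) (ha0 : a0 ∈ Set.Icc (0 : ℝ) 1) (ha1 : a1 ∈ Set.Icc (0 : ℝ) 1)
    (hb0 : b0 ∈ Set.Icc (0 : ℝ) 1) (hb1 : b1 ∈ Set.Icc (0 : ℝ) 1)
    (hle : z * b1 + (1 - z) * b0 ≤ z * a1 + (1 - z) * a0) :
    y * b1 + (1 - y) * b0 ≤ (1 + A) * (y * a1 + (1 - y) * a0) + (2 + 1 / A) * klB y z := by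
  wlog hzy : z ≤ y generalizing y z a0 a1 b0 b1
  · have := this (y := 1 - y) (z := 1 - z) (by linarith) (by linarith) (by linarith) (by linarith)
      ha1 ha0 hb1 hb0 (by linarith) (by linarith)
    rw [klB_swap] at this
    linarith
  obtain ⟨ha0, ha0'⟩ := ha0
  obtain ⟨ha1, ha1'⟩ := ha1
  obtain ⟨hb0, hb0'⟩ := hb0
  obtain ⟨hb1, hb1'⟩ := hb1
  have hk := klB_nonneg hz hz1 hy0 hy
  have hc := klB_core hz hz1 hzy hy
  set M := max z (1 - z) with hM
  set K := klB y z
  have hMp : 0 < M := lt_max_of_lt_left hz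
  have h1z : 0 < 1 - z := by linarith
  have hA2 : 0 < 2 + 1 / A := by positivity
  have hc0 : 0 ≤ (1 - y) * z := mul_nonneg (by linarith) hz.le
  -- scalar inequality
  have hs : (y - z) - A * ((1 - y) * z) ≤ (2 + 1 / A) * (M * K) := by
    generalize hC : (1 - y) * z = C at *
    generalize hE : y - z = e at *
    have he : 0 ≤ e := by linarith
    generalize hKK : M * K = k at *
    have hk0 : 0 ≤ k := by rw [← hKK]; positivity
    rcases le_or_gt (e - A * C) 0 with h | h
    · exact h.trans (by positivity)
    have hep : 0 < e := by nlinarith [mul_nonneg hA.le hc0]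
    have hden : 0 < 2 * (e + 2 * C) := by linarith
    have e1 : (2 + 1 / A) * k = (2 * A + 1) * k / A := by field_simp
    rw [e1, le_div_iff₀ hA]
    refine le_of_mul_le_mul_left ?_ hden
    have := mul_le_mul_of_nonneg_left hc (show 0 ≤ 2 * A + 1 by linarith)
    have h2 : 0 ≤ A ^ 2 * e * C := by positivity
    nlinarith [sq_nonneg (e - 2 * A * C)]
  have hl0 : 0 ≤ y * a1 := by positivity
  have hl1 : 0 ≤ (1 - y) * b0 := mul_nonneg (by linarith) hb0
  refine le_of_mul_le_mul_left ?_ h1z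
  rcases le_or_gt b1 a1 with h | h
  · have p1 : 0 ≤ (1 - z) * (A * (y * a1 + (1 - y) * a0)) :=
      mul_nonneg h1z.le (mul_nonneg hA.le (add_nonneg hl0 (mul_nonneg (by linarith) ha0)))
    have p2 : 0 ≤ (1 - z) * ((2 + 1 / A) * K) := by positivity
    have p3 : 0 ≤ (y - z) * (a1 - b1) := mul_nonneg (by linarith) (by linarith)
    have p4 := mul_le_mul_of_nonneg_left hle (show 0 ≤ 1 - y by linarith)
    nlinarith
  · have hd : 0 ≤ b1 - a1 := by linarith
    have q1 : (b1 - a1) * M ≤ 1 - z := by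
      rcases max_choice z (1 - z) with h | h
      · rw [hM, h]; nlinarith
      · rw [hM, h]; nlinarith
    have q2 := mul_le_mul_of_nonneg_left hs hd
    have q3 := mul_le_mul_of_nonneg_right q1 (show 0 ≤ (2 + 1 / A) * K by positivity)
    have hD : z * (b1 - a1) ≤ (1 - z) * (a0 - b0) := by linarith
    have q4 := mul_le_mul_of_nonneg_left hD (show 0 ≤ (1 - y) * (1 + A) from
      mul_nonneg (by linarith) (by linarith))
    have q5 : 0 ≤ (1 - z) * ((1 + A) * (y * a1)) := by positivity
    have q6 : 0 ≤ (1 - z) * (A * ((1 - y) * b0)) := by positivity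
    have q7 : 0 ≤ (1 - z) * (A * (y * a1)) := by positivity
    nlinarith

section glue
variable {ρ : List Bool → ℝ}

lemma condP_sum (h : ∀ x, ρ x = ρ (x ++ [false]) + ρ (x ++ [true])) {x : List Bool}
    (hx : ρ x ≠ 0) : condP ρ x false = 1 - condP ρ x true := by
  have := h x
  unfold condP
  field_simp
  linarith

lemma step_all {μ ξ : List Bool → ℝ} {c : ℝ} (hc : 0 < c) (hμ0 : ∀ x, 0 ≤ μ x)
    (hμ : ∀ x, μ x = μ (x ++ [false]) + μ (x ++ [true]))
    (hξ : ∀ x, ξ x = ξ (x ++ [false]) + ξ (x ++ [true]))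
    (hdom : ∀ x, c * μ x ≤ ξ x)
    {l : Bool → Bool → ℝ} (hl : ∀ a y, l a y ∈ Set.Icc (0 : ℝ) 1)
    {x : List Bool} (hx : μ x ≠ 0) :
    0 ≤ instEnt μ ξ x ∧ ∀ (A : ℝ) (s m : Bool), 0 < A →
      expLoss ξ l x s ≤ expLoss ξ l x m →
      expLoss μ l x s ≤ (1 + A) * expLoss μ l x m + (2 + 1 / A) * instEnt μ ξ x := by
  have hξ0 : ∀ x, 0 ≤ ξ x := fun x => (mul_nonneg hc.le (hμ0 x)).trans (hdom x)
  have hμx : 0 < μ x := lt_of_le_of_ne (hμ0 x) hx.symm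
  have hξx : 0 < ξ x := lt_of_lt_of_le (mul_pos hc hμx) (hdom x)
  have hy := condP_sum hμ hx
  have hz := condP_sum hξ hξx.ne'
  have hyt : 0 ≤ condP μ x true := div_nonneg (hμ0 _) hμx.le
  have hyf : 0 ≤ condP μ x false := div_nonneg (hμ0 _) hμx.le
  have hzt : 0 ≤ condP ξ x true := div_nonneg (hξ0 _) hξx.le
  have hzf : 0 ≤ condP ξ x false := div_nonneg (hξ0 _) hξx.le
  have hac : ∀ b, condP ξ x b = 0 → condP μ x b = 0 := by
    intro b hb
    have h1 : ξ (x ++ [b]) = 0 := by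
      unfold condP at hb
      rcases div_eq_zero_iff.1 hb with h | h
      · exact h
      · exact absurd h hξx.ne'
    have h2 := hdom (x ++ [b])
    have h3 : μ (x ++ [b]) = 0 := by
      have := hμ0 (x ++ [b])
      by_contra hne
      have : 0 < μ (x ++ [b]) := lt_of_le_of_ne this (Ne.symm hne)
      nlinarith [mul_pos hc this]
    simp [condP, h3]
  have hact := hac true
  have hacf := hac false
  have hI : instEnt μ ξ x = klB (condP μ x true) (condP ξ x true) := by
    simp [instEnt, klB, hy, hz]
  have hL : ∀ y, expLoss μ l x y
      = condP μ x true * l true y + (1 - condP μ x true) * l false y := by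
    intro y; simp [expLoss, hy]
  have hLx : ∀ y, expLoss ξ l x y
      = condP ξ x true * l true y + (1 - condP ξ x true) * l false y := by
    intro y; simp [expLoss, hz]
  rw [hI]
  simp only [hL, hLx]
  rw [hy] at hyf hacf
  rw [hz] at hzf hacf
  generalize condP μ x true = y at *
  generalize condP ξ x true = z at *
  rcases hzt.eq_or_lt with h0 | h0
  · have hy0 := hact h0.symm
    subst h0; subst hy0
    have hk : klB 0 0 = 0 := by simp [klB]
    refine ⟨hk.ge, fun A s m hA h => ?_⟩
    rw [hk]
    have := mul_nonneg hA.le (hl false m).1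
    linarith
  rcases hzf.eq_or_lt with h1 | h1
  · have hy1 := hacf h1.symm
    have hy1 : y = 1 := by linarith
    have hz1 : z = 1 := by linarith
    subst hy1; subst hz1
    have hk : klB 1 1 = 0 := by simp [klB]
    refine ⟨hk.ge, fun A s m hA h => ?_⟩
    rw [hk]
    have := mul_nonneg hA.le (hl true m).1
    linarith
  · exact ⟨klB_nonneg h0 (by linarith) hyt (by linarith), fun A s m hA h =>
      step_bound h0 (by linarith) hyt (by linarith) hA (hl _ _) (hl _ _) (hl _ _) (hl _ _) h⟩

end glue

/-- relative loss ratio bound: whenever `L_{nΛμ} > 0`,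
`L_{nΛξ}/L_{nΛμ} ≤ 1 + 2√(H_n/L_{nΛμ}) + 2 H_n/L_{nΛμ}`; in particular the
ratio tends to `1` whenever `L_{nΛμ} → ∞` and `H_n` stays bounded. -/
theorem loss_ratio_bound {ι : Type*} [Countable ι]
    (μs : ι → List Bool → ℝ) (w : ι → ℝ)
    (hμs : ∀ i, IsDistr (μs i)) (hw : ∀ i, 0 < w i) (hw1 : HasSum w 1)
    (ξ : List Bool → ℝ) (hξ : ∀ x, HasSum (fun i => w i * μs i x) (ξ x))
    (i₀ : ι)
    (l : Bool → Bool → ℝ) (hl : ∀ a y, l a y ∈ Set.Icc (0 : ℝ) 1)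
    (Yμ Yξ : List Bool → Bool)
    (hYμ : IsPredictor (μs i₀) l Yμ) (hYξ : IsPredictor ξ l Yξ) :
    (∀ n : ℕ, 1 ≤ n → 0 < totalLoss (μs i₀) l Yμ n →
      totalLoss (μs i₀) l Yξ n / totalLoss (μs i₀) l Yμ n ≤
        1 + 2 * Real.sqrt (totalEnt (μs i₀) ξ n / totalLoss (μs i₀) l Yμ n) +
          2 * (totalEnt (μs i₀) ξ n / totalLoss (μs i₀) l Yμ n)) ∧
    (Tendsto (fun n : ℕ => totalLoss (μs i₀) l Yμ n) atTop atTop →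
      (∃ C : ℝ, ∀ n : ℕ, totalEnt (μs i₀) ξ n ≤ C) →
      Tendsto (fun n : ℕ => totalLoss (μs i₀) l Yξ n / totalLoss (μs i₀) l Yμ n)
        atTop (nhds 1)) := by
  classical
  have hμ := hμs i₀
  have hadd : ∀ x, ξ x = ξ (x ++ [false]) + ξ (x ++ [true]) := by
    intro x
    refine (hξ x).unique ?_
    have := (hξ (x ++ [false])).add (hξ (x ++ [true]))
    convert this using 1
    funext i
    rw [(hμs i).2.2 x]; ring
  have hdom : ∀ x, w i₀ * μs i₀ x ≤ ξ x := fun x =>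
    le_hasSum (hξ x) i₀ (fun i _ => mul_nonneg (hw i).le ((hμs i).1 x))
  have hstep := fun (x : List Bool) (hx : μs i₀ x ≠ 0) =>
    step_all (hw i₀) hμ.1 hμ.2.2 hadd hdom hl hx
  generalize μs i₀ = μ at *
  have hH : ∀ n, 0 ≤ totalEnt μ ξ n := fun n =>
    Finset.sum_nonneg fun t _ => Finset.sum_nonneg fun x _ => by
      by_cases hx : μ (List.ofFn x) = 0
      · simp [hx]
      · exact mul_nonneg (hμ.1 _) (hstep _ hx).1
  have hlow : ∀ n, totalLoss μ l Yμ n ≤ totalLoss μ l Yξ n := fun n =>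
    Finset.sum_le_sum fun t _ => Finset.sum_le_sum fun x _ =>
      mul_le_mul_of_nonneg_left (hYμ _ _) (hμ.1 _)
  have hA : ∀ n (A : ℝ), 0 < A → totalLoss μ l Yξ n
      ≤ (1 + A) * totalLoss μ l Yμ n + (2 + 1 / A) * totalEnt μ ξ n := by
    intro n A hA
    unfold totalLoss totalEnt
    simp only [Finset.mul_sum, ← Finset.sum_add_distrib]
    refine Finset.sum_le_sum fun t _ => Finset.sum_le_sum fun x _ => ?_
    by_cases hx : μ (List.ofFn x) = 0
    · simp [hx]
    · have := mul_le_mul_of_nonneg_left ((hstep _ hx).2 A _ _ hA (hYξ _ (Yμ (List.ofFn x))))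
        (hμ.1 (List.ofFn x))
      linarith
  have main : ∀ n : ℕ, 0 < totalLoss μ l Yμ n →
      totalLoss μ l Yξ n / totalLoss μ l Yμ n ≤
        1 + 2 * Real.sqrt (totalEnt μ ξ n / totalLoss μ l Yμ n) +
          2 * (totalEnt μ ξ n / totalLoss μ l Yμ n) := by
    intro n hL
    have hr : ∀ A : ℝ, 0 < A → totalLoss μ l Yξ n / totalLoss μ l Yμ n ≤
        (1 + A) + (2 + 1 / A) * (totalEnt μ ξ n / totalLoss μ l Yμ n) := by
      intro A hAp
      have := hA n A hAp
      rw [div_le_iff₀ hL]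
      have e : ((1 + A) + (2 + 1 / A) * (totalEnt μ ξ n / totalLoss μ l Yμ n))
          * totalLoss μ l Yμ n
          = (1 + A) * totalLoss μ l Yμ n + (2 + 1 / A) * totalEnt μ ξ n := by
        field_simp
      rw [e]; exact this
    have hq : 0 ≤ totalEnt μ ξ n / totalLoss μ l Yμ n := div_nonneg (hH n) hL.le
    generalize totalEnt μ ξ n / totalLoss μ l Yμ n = q at *
    rcases hq.eq_or_lt with h | h
    · subst h
      refine le_of_forall_pos_le_add fun ε hε => ?_
      have := hr ε hε
      simp at this ⊢
      exact this
    · have hs := Real.sqrt_pos.2 h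
      have := hr _ hs
      have e : 1 / Real.sqrt q * q = Real.sqrt q := by
        rw [one_div, inv_mul_eq_div, Real.div_sqrt]
      linarith
  refine ⟨fun n _ => main n, fun hT ⟨C, hC⟩ => ?_⟩
  have hq : Tendsto (fun n => totalEnt μ ξ n / totalLoss μ l Yμ n) atTop (nhds 0) := by
    refine squeeze_zero' ?_ ?_ (Tendsto.const_div_atTop hT C)
    · filter_upwards [hT.eventually_gt_atTop 0] with n hn using div_nonneg (hH n) hn.le
    · filter_upwards [hT.eventually_gt_atTop 0] with n hn
      exact div_le_div_of_nonneg_right (hC n) hn.le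
  have hup : Tendsto (fun n => 1 + 2 * Real.sqrt (totalEnt μ ξ n / totalLoss μ l Yμ n) +
          2 * (totalEnt μ ξ n / totalLoss μ l Yμ n)) atTop (nhds 1) := by
    have := ((hq.sqrt.const_mul 2).const_add 1).add (hq.const_mul 2)
    simpa using this
  refine tendsto_of_tendsto_of_tendsto_of_le_of_le' tendsto_const_nhds hup ?_ ?_
  · filter_upwards [hT.eventually_gt_atTop 0] with n hn
    rw [le_div_iff₀ hn, one_mul]; exact hlow n
  · filter_upwards [hT.eventually_gt_atTop 0] with n hn using main n hn
end

section
/- Pointwise (per-step) loss bound: for all real A > 0 and B ≥ A/4 + 1/A, every t ≥ 1, and every history x_{<t} with μ(x_{<t}) > 0 and ξ(x_{<t}) > 0, the instantaneous losses satisfy l_{tΛξ}(x_{<t}) ≤ (A+1) l_{tΛμ}(x_{<t}) + (B+1) h_t(x_{<t}). -/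
open Finset Filter

/-- One term of the Donsker-Varadhan inequality. -/
lemma plb_term (p q u : ℝ) (hp : 0 ≤ p) (hq : 0 ≤ q) (hac : q = 0 → p = 0) :
    p * u ≤ p * Real.log (p / q) + (q * Real.exp u - p) := by
  rcases hp.eq_or_lt with h | hp
  · subst h
    have := Real.exp_pos u
    simp only [zero_mul, sub_zero, zero_add]
    positivity
  have hq : 0 < q := lt_of_le_of_ne hq (fun h => hp.ne' (hac h.symm))
  have h1 := Real.log_le_sub_one_of_pos (x := q * Real.exp u / p) (by positivity)
  rw [Real.log_div (by positivity) hp.ne', Real.log_mul hq.ne' (Real.exp_pos u).ne',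
    Real.log_exp] at h1
  rw [Real.log_div hp.ne' hq.ne']
  have h2 := mul_le_mul_of_nonneg_left h1 hp.le
  have h3 : p * (q * Real.exp u / p - 1) = q * Real.exp u - p := by field_simp
  rw [h3] at h2
  linarith

lemma plb_chord (s a : ℝ) (h0 : 0 ≤ a) (h1 : a ≤ 1) :
    Real.exp (s * a) ≤ 1 + a * (Real.exp s - 1) := by
  have h := convexOn_exp.2 (Set.mem_univ s) (Set.mem_univ (0 : ℝ)) h0 (sub_nonneg.2 h1)
    (by ring)
  simp only [smul_eq_mul, mul_zero, add_zero, Real.exp_zero, mul_one] at h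
  rw [mul_comm s a]
  linarith

lemma plb_cosh (A s : ℝ) (hA : 0 < A) (hs : s * (A / 4 + 1 / A + 1) = 1) :
    Real.exp s + Real.exp (-(s * (A + 1))) ≤ 2 := by
  have hs' : s = 4 * A / (A + 2) ^ 2 := by
    field_simp at hs ⊢
    linarith
  set z := A / (A + 2) with hz
  have e1 : s = 2 * z + -(2 * z ^ 2) := by
    rw [hs', hz]; field_simp; ring
  have e2 : -(s * (A + 1)) = -(2 * z) + -(2 * z ^ 2) := by
    rw [hs', hz]; field_simp; ring
  have hc := Real.cosh_le_exp_half_sq (2 * z)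
  rw [Real.cosh_eq, show (2 * z) ^ 2 / 2 = 2 * z ^ 2 by ring] at hc
  rw [e2, e1, Real.exp_add, Real.exp_add, ← add_mul]
  have h3 : Real.exp (2 * z ^ 2) * Real.exp (-(2 * z ^ 2)) = 1 := by
    rw [← Real.exp_add]; simp
  have h4 := Real.exp_pos (-(2 * z ^ 2))
  nlinarith

lemma plb_exp (A s a c : ℝ) (hA : 0 < A) (hs0 : 0 < s) (hs : s * (A / 4 + 1 / A + 1) = 1)
    (ha : a ∈ Set.Icc (0 : ℝ) 1) (hc : c ∈ Set.Icc (0 : ℝ) 1) :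
    Real.exp (s * (a - (A + 1) * c)) ≤ 1 + (Real.exp s - 1) * (a - c) := by
  obtain ⟨ha0, ha1⟩ := ha
  obtain ⟨hc0, hc1⟩ := hc
  have h1 := plb_chord s a ha0 ha1
  have h2 := plb_chord (-(s * (A + 1))) c hc0 hc1
  have h3 := plb_cosh A s hA hs
  have hk : 0 ≤ Real.exp s - 1 := by
    have := Real.add_one_le_exp s
    linarith
  have h4 : Real.exp (-(s * (A + 1)) * c) ≤ 1 - c * (Real.exp s - 1) := by nlinarith
  rw [show s * (a - (A + 1) * c) = s * a + -(s * (A + 1)) * c by ring, Real.exp_add]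
  have h5 : Real.exp (s * a) * Real.exp (-(s * (A + 1)) * c) ≤
      (1 + a * (Real.exp s - 1)) * (1 - c * (Real.exp s - 1)) :=
    mul_le_mul h1 h4 (Real.exp_pos _).le (by positivity)
  have h6 : 0 ≤ a * c * (Real.exp s - 1) ^ 2 := by positivity
  nlinarith

/-- pointwise loss bound, eq. (10): for all `A > 0`,
`B ≥ A/4 + 1/A` and every history `x` with `μ(x) > 0` and `ξ(x) > 0`,
`l_{tΛξ}(x) ≤ (A+1) l_{tΛμ}(x) + (B+1) h_t(x)`. -/
theorem pointwise_loss_bound {ι : Type*} [Countable ι]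
    (μs : ι → List Bool → ℝ) (w : ι → ℝ)
    (hμs : ∀ i, IsDistr (μs i)) (hw : ∀ i, 0 < w i) (hw1 : HasSum w 1)
    (ξ : List Bool → ℝ) (hξ : ∀ x, HasSum (fun i => w i * μs i x) (ξ x))
    (i₀ : ι)
    (l : Bool → Bool → ℝ) (hl : ∀ a y, l a y ∈ Set.Icc (0 : ℝ) 1)
    (Yμ Yξ : List Bool → Bool)
    (hYμ : IsPredictor (μs i₀) l Yμ) (hYξ : IsPredictor ξ l Yξ)
    (A B : ℝ) (hA : 0 < A) (hB : A / 4 + 1 / A ≤ B)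
    (x : List Bool) (hμx : 0 < μs i₀ x) (hξx : 0 < ξ x) :
    expLoss (μs i₀) l x (Yξ x) ≤
      (A + 1) * expLoss (μs i₀) l x (Yμ x) + (B + 1) * instEnt (μs i₀) ξ x := by
  have hξadd : ξ x = ξ (x ++ [false]) + ξ (x ++ [true]) := by
    refine (hξ x).unique ?_
    have h := (hξ (x ++ [false])).add (hξ (x ++ [true]))
    convert h using 1
    funext i
    rw [(hμs i).2.2 x]; ring
  have hterm0 : ∀ b i, 0 ≤ w i * μs i (x ++ [b]) := fun b i =>
    mul_nonneg (hw i).le ((hμs i).1 _)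
  have hle : ∀ b, w i₀ * μs i₀ (x ++ [b]) ≤ ξ (x ++ [b]) := fun b =>
    le_hasSum (hξ _) i₀ (fun i _ => hterm0 b i)
  have hq0 : ∀ b, 0 ≤ condP ξ x b := fun b =>
    div_nonneg ((hterm0 b i₀).trans (hle b)) hξx.le
  have hp0 : ∀ b, 0 ≤ condP (μs i₀) x b := fun b => div_nonneg ((hμs i₀).1 _) hμx.le
  have hac : ∀ b, condP ξ x b = 0 → condP (μs i₀) x b = 0 := by
    intro b h
    unfold condP at h ⊢
    have h1 : ξ (x ++ [b]) = 0 := by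
      rcases div_eq_zero_iff.1 h with h | h
      · exact h
      · exact absurd h hξx.ne'
    have h2 := hle b
    have h3 := (hμs i₀).1 (x ++ [b])
    have h4 : μs i₀ (x ++ [b]) = 0 := by
      have := hw i₀
      nlinarith
    rw [h4, zero_div]
  have hq1 : condP ξ x true + condP ξ x false = 1 := by
    unfold condP
    rw [← add_div, add_comm, ← hξadd, div_self hξx.ne']
  have hp1 : condP (μs i₀) x true + condP (μs i₀) x false = 1 := by
    unfold condP
    rw [← add_div, add_comm, ← (hμs i₀).2.2 x, div_self hμx.ne']
  have hmin := hYξ x (Yμ x)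
  simp only [expLoss, instEnt, Fintype.sum_bool] at hmin ⊢
  generalize Yξ x = y at *
  generalize Yμ x = m at *
  have T := fun b u => plb_term (condP (μs i₀) x b) (condP ξ x b) u (hp0 b) (hq0 b) (hac b)
  have hK : 0 ≤ condP (μs i₀) x true * Real.log (condP (μs i₀) x true / condP ξ x true)
      + condP (μs i₀) x false * Real.log (condP (μs i₀) x false / condP ξ x false) := by
    have h1 := T true 0
    have h2 := T false 0
    simp only [Real.exp_zero, mul_zero, mul_one] at h1 h2
    linarith
  set K := condP (μs i₀) x true * Real.log (condP (μs i₀) x true / condP ξ x true)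
      + condP (μs i₀) x false * Real.log (condP (μs i₀) x false / condP ξ x false) with hKdef
  have hC : 0 < A / 4 + 1 / A + 1 := by positivity
  set C := A / 4 + 1 / A + 1 with hCdef
  have hs : C⁻¹ * C = 1 := inv_mul_cancel₀ hC.ne'
  have hs0 : 0 < C⁻¹ := inv_pos.2 hC
  generalize C⁻¹ = s at *
  have E := fun b => mul_le_mul_of_nonneg_left
    (plb_exp A s (l b y) (l b m) hA hs0 hs (hl b y) (hl b m)) (hq0 b)
  have hk : 0 ≤ Real.exp s - 1 := by
    have := Real.add_one_le_exp s
    linarith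
  have E1 := E true
  have E2 := E false
  have T1 := T true (s * (l true y - (A + 1) * l true m))
  have T2 := T false (s * (l false y - (A + 1) * l false m))
  have hprod := mul_nonneg hk (sub_nonneg.2 hmin)
  have main : s * (condP (μs i₀) x true * (l true y - (A + 1) * l true m)
      + condP (μs i₀) x false * (l false y - (A + 1) * l false m)) ≤ K := by
    linarith
  have main2 := mul_le_mul_of_nonneg_left main hC.le
  rw [← mul_assoc, mul_comm C s, hs, one_mul] at main2
  have hBK : C * K ≤ (B + 1) * K := mul_le_mul_of_nonneg_right (by linarith) hK
  linarith
end
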